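/- arXiv:1307.1242 — 4 statements merged into one kernel-verified Lean document; each statement's English description precedes it below -/
import Mathlib

section
/- Let Δ ≥ 1 and let T_Δ be the tree consisting of a root v of degree Δ, with neighbors v_1, …, v_Δ, where each v_i additionally has exactly Δ−1 pendant leaves (so T_Δ has 1 + Δ + Δ(Δ−1) vertices). Then the star chromatic index of T_Δ equals ⌊3Δ/2⌋. -/
/-- A star edge coloring of a simple graph with `k` colors: edges sharing an
endpoint receive distinct colors, and on every path with exactly 4 edges
(a walk of length 4 whose five vertices are pairwise distinct) and on every
cycle of length 4, at least three distinct colors appear among the four edges. -/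
def IsStarEdgeColoring {V : Type*} {k : ℕ} (G : SimpleGraph V)
    (c : Sym2 V → Fin k) : Prop :=
  (∀ u v w : V, G.Adj u v → G.Adj u w → v ≠ w → c s(u, v) ≠ c s(u, w)) ∧
  (∀ v₀ v₁ v₂ v₃ v₄ : V,
    G.Adj v₀ v₁ → G.Adj v₁ v₂ → G.Adj v₂ v₃ → G.Adj v₃ v₄ →
    ([v₀, v₁, v₂, v₃, v₄].Pairwise (· ≠ ·) ∨
      (v₀ = v₄ ∧ [v₀, v₁, v₂, v₃].Pairwise (· ≠ ·))) →
    3 ≤ ({c s(v₀, v₁), c s(v₁, v₂), c s(v₂, v₃), c s(v₃, v₄)} : Finset (Fin k)).card)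

/-- The star chromatic index of a graph: the least `k` such that `G` admits a
star edge coloring with `k` colors. -/
noncomputable def starChromaticIndex {V : Type*} (G : SimpleGraph V) : ℕ :=
  sInf {k : ℕ | ∃ c : Sym2 V → Fin k, IsStarEdgeColoring G c}

/-- The tree `T_Δ` with a root of degree `Δ` whose `Δ` neighbors each carry
`Δ - 1` additional pendant leaves. -/
def spiderTree (Δ : ℕ) : SimpleGraph (Unit ⊕ Fin Δ ⊕ Fin Δ × Fin (Δ - 1)) :=
  SimpleGraph.fromRel fun x y =>
    (∃ i : Fin Δ, x = Sum.inl () ∧ y = Sum.inr (Sum.inl i)) ∨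
    (∃ (i : Fin Δ) (j : Fin (Δ - 1)),
      x = Sum.inr (Sum.inl i) ∧ y = Sum.inr (Sum.inr (i, j)))

namespace SpiderAux

abbrev Vtx (Δ : ℕ) := Unit ⊕ Fin Δ ⊕ Fin Δ × Fin (Δ - 1)

lemma adj_root {Δ : ℕ} (i : Fin Δ) :
    (spiderTree Δ).Adj (Sum.inl ()) (Sum.inr (Sum.inl i)) := by
  simp [spiderTree]

lemma adj_leaf {Δ : ℕ} (i : Fin Δ) (j : Fin (Δ - 1)) :
    (spiderTree Δ).Adj (Sum.inr (Sum.inl i)) (Sum.inr (Sum.inr (i, j))) := by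
  simp [spiderTree]

lemma adj_cases {Δ : ℕ} {x y : Vtx Δ} (h : (spiderTree Δ).Adj x y) :
    (∃ i : Fin Δ, x = Sum.inl () ∧ y = Sum.inr (Sum.inl i)) ∨
    (∃ (i : Fin Δ) (j : Fin (Δ - 1)),
      x = Sum.inr (Sum.inl i) ∧ y = Sum.inr (Sum.inr (i, j))) ∨
    (∃ i : Fin Δ, y = Sum.inl () ∧ x = Sum.inr (Sum.inl i)) ∨
    (∃ (i : Fin Δ) (j : Fin (Δ - 1)),
      y = Sum.inr (Sum.inl i) ∧ x = Sum.inr (Sum.inr (i, j))) := by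
  rw [spiderTree, SimpleGraph.fromRel_adj] at h
  exact or_assoc.1 h.2

/-- Every non-backtracking walk of length 4 goes leaf, branch, root, branch, leaf. -/
lemma walk_form {Δ : ℕ} {v₀ v₁ v₂ v₃ v₄ : Vtx Δ}
    (h01 : (spiderTree Δ).Adj v₀ v₁) (h12 : (spiderTree Δ).Adj v₁ v₂)
    (h23 : (spiderTree Δ).Adj v₂ v₃) (h34 : (spiderTree Δ).Adj v₃ v₄)
    (n02 : v₀ ≠ v₂) (n13 : v₁ ≠ v₃) (n24 : v₂ ≠ v₄) :
    ∃ (i i' : Fin Δ) (j j' : Fin (Δ - 1)), i ≠ i' ∧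
      v₀ = Sum.inr (Sum.inr (i, j)) ∧ v₁ = Sum.inr (Sum.inl i) ∧ v₂ = Sum.inl () ∧
      v₃ = Sum.inr (Sum.inl i') ∧ v₄ = Sum.inr (Sum.inr (i', j')) := by
  rcases adj_cases h12 with ⟨i, rfl, rfl⟩ | ⟨i, j, rfl, rfl⟩ | ⟨i, rfl, rfl⟩ | ⟨i, j, rfl, rfl⟩
  · rcases adj_cases h23 with ⟨a, h, rfl⟩ | ⟨a, b, h, rfl⟩ | ⟨a, rfl, h⟩ | ⟨a, b, rfl, h⟩ <;>
      simp at h n13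
    subst h
    rcases adj_cases h34 with ⟨c, h, rfl⟩ | ⟨c, d, h, rfl⟩ | ⟨c, rfl, h⟩ | ⟨c, d, rfl, h⟩ <;>
      simp at h
    exact absurd (by rw [h.1]) n24
  · rcases adj_cases h23 with ⟨a, h, rfl⟩ | ⟨a, b, h, rfl⟩ | ⟨a, rfl, h⟩ | ⟨a, b, rfl, h⟩ <;>
      simp at h
    exact absurd (by rw [h.1]) n13
  · rcases adj_cases h23 with ⟨a, h, rfl⟩ | ⟨a, b, h, rfl⟩ | ⟨a, rfl, h⟩ | ⟨a, b, rfl, h⟩ <;>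
      simp at h
    rcases adj_cases h34 with ⟨c, h, rfl⟩ | ⟨c, d, h, rfl⟩ | ⟨c, rfl, h⟩ | ⟨c, d, rfl, h⟩ <;>
      simp at h n24
    rcases adj_cases h01 with ⟨e, rfl, h'⟩ | ⟨e, f, rfl, h'⟩ | ⟨e, h', rfl⟩ | ⟨e, f, h', rfl⟩ <;>
      simp at h' n02
    subst h h'
    exact ⟨i, a, f, d, fun e => n13 (by rw [e]), rfl, rfl, rfl, rfl, rfl⟩
  · rcases adj_cases h01 with ⟨e, rfl, h'⟩ | ⟨e, f, rfl, h'⟩ | ⟨e, h', rfl⟩ | ⟨e, f, h', rfl⟩ <;>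
      simp at h'
    exact absurd (by rw [h'.1]) n02

lemma lower {Δ k : ℕ} (hΔ : 1 ≤ Δ) (c : Sym2 (Vtx Δ) → Fin k)
    (hc : IsStarEdgeColoring (spiderTree Δ) c) : 3 * Δ / 2 ≤ k := by
  classical
  obtain ⟨hp, hs⟩ := hc
  set r : Fin Δ → Fin k := fun i => c s(Sum.inl (), Sum.inr (Sum.inl i)) with hr
  set S : Fin Δ → Fin (Δ - 1) → Fin k :=
    fun i j => c s(Sum.inr (Sum.inl i), Sum.inr (Sum.inr (i, j))) with hS
  have rinj : Function.Injective r := by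
    intro a b hab
    by_contra hne
    exact hp _ _ _ (adj_root a) (adj_root b) (by simpa using hne) hab
  have Sinj : ∀ i, Function.Injective (S i) := by
    intro i a b hab
    by_contra hne
    exact hp _ _ _ (adj_leaf i a) (adj_leaf i b) (by simpa using hne) hab
  have Sr : ∀ i j, S i j ≠ r i := by
    intro i j h
    refine hp _ _ _ (adj_leaf i j) (adj_root i).symm (by simp) ?_
    rw [Sym2.eq_swap (a := Sum.inr (Sum.inl i)) (b := Sum.inl ())]
    exact h
  have key : ∀ i i' j j', i ≠ i' → S i j = r i' → S i' j' = r i → False := by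
    intro i i' j j' hne h1 h2
    have := hs _ _ _ _ _ (adj_leaf i j).symm (adj_root i).symm (adj_root i') (adj_leaf i' j')
      (Or.inl (by simp [hne]))
    rw [Sym2.eq_swap (a := Sum.inr (Sum.inl i)) (b := Sum.inl ()),
      Sym2.eq_swap (a := Sum.inr (Sum.inr (i, j)))] at this
    change 3 ≤ ({S i j, r i, r i', S i' j'} : Finset (Fin k)).card at this
    rw [h1, h2] at this
    have h3 : ({r i', r i, r i', r i} : Finset (Fin k)) ⊆ {r i, r i'} := by
      intro x; simp; tauto
    have := Finset.card_le_card h3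
    have := Finset.card_le_two (a := r i) (b := r i')
    omega
  let D : Fin Δ → Finset (Fin Δ) := fun i => Finset.univ.filter fun i' => ∃ j, S i j = r i'
  have hk : Δ ≤ k := by simpa using Fintype.card_le_of_injective r rinj
  have hD : ∀ i, Δ - 1 ≤ (D i).card + (k - Δ) := by
    intro i
    have hsub : Finset.univ.image (S i) ⊆ (D i).image r ∪ (Finset.univ.image r)ᶜ := by
      intro x hx
      obtain ⟨j, -, rfl⟩ := Finset.mem_image.1 hx
      by_cases h : ∃ i', r i' = S i j
      · obtain ⟨i', h⟩ := h
        exact Finset.mem_union_left _ (Finset.mem_image.2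
          ⟨i', by simp only [D, Finset.mem_filter, Finset.mem_univ, true_and]; exact ⟨j, h.symm⟩, h⟩)
      · refine Finset.mem_union_right _ ?_
        simpa using h
    have h1 := (Finset.card_le_card hsub).trans (Finset.card_union_le _ _)
    rw [Finset.card_image_of_injective _ (Sinj i), Finset.card_image_of_injective _ rinj,
      Finset.card_compl, Finset.card_image_of_injective _ rinj] at h1
    simpa using h1
  let E : Finset (Fin Δ × Fin Δ) := Finset.univ.filter fun p => p.2 ∈ D p.1
  have hE : E.card = ∑ i, (D i).card := by
    have : E = (Finset.univ.sigma D).map (Equiv.sigmaEquivProd _ _).toEmbedding := by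
      ext ⟨a, b⟩; simp [E]
    rw [this, Finset.card_map, Finset.card_sigma]
  have hdis : Disjoint E (E.map (Equiv.prodComm _ _).toEmbedding) := by
    rw [Finset.disjoint_left]
    rintro ⟨a, b⟩ h1 h2
    simp only [E, D, Finset.mem_map_equiv, Finset.mem_filter, Finset.mem_univ, true_and,
      Equiv.prodComm_symm, Equiv.prodComm_apply, Prod.swap] at h1 h2
    obtain ⟨j, h1⟩ := h1
    obtain ⟨j', h2⟩ := h2
    by_cases hab : a = b
    · subst hab; exact Sr _ _ h1
    · exact key a b j j' hab h1 h2
  have hoff : E ∪ (E.map (Equiv.prodComm _ _).toEmbedding) ⊆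
      (Finset.univ : Finset (Fin Δ)).offDiag := by
    rintro ⟨a, b⟩ h
    simp only [E, D, Finset.mem_union, Finset.mem_map_equiv, Finset.mem_filter, Finset.mem_univ,
      true_and, Equiv.prodComm_symm, Equiv.prodComm_apply, Prod.swap, Finset.mem_offDiag] at h ⊢
    rintro rfl
    rcases h with ⟨j, h⟩ | ⟨j, h⟩ <;> exact Sr _ _ h
  have h2 := Finset.card_le_card hoff
  rw [Finset.card_union_of_disjoint hdis, Finset.card_map, Finset.offDiag_card] at h2
  simp only [Finset.card_univ, Fintype.card_fin] at h2
  have h3 : Δ * (Δ - 1) ≤ E.card + Δ * (k - Δ) := by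
    have := Finset.sum_le_sum (s := Finset.univ) (fun i _ => hD i)
    rw [Finset.sum_add_distrib, ← hE] at this
    simpa using this
  obtain ⟨n, rfl⟩ := Nat.exists_eq_add_of_le' hΔ
  obtain ⟨m, rfl⟩ := Nat.exists_eq_add_of_le hk
  have e1 : (n + 1) * (n + 1) - (n + 1) = (n + 1) * n := by
    rw [Nat.mul_succ]; simp
  rw [e1] at h2
  simp only [Nat.add_sub_cancel, Nat.add_sub_cancel_left] at h3
  have h4 : (n + 1) * n ≤ (n + 1) * (2 * m) := by nlinarith
  have h5 := Nat.le_of_mul_le_mul_left h4 (Nat.succ_pos n)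
  omega

/-- leaf colour -/
def leafCol (Δ i j : ℕ) : ℕ :=
  if j < (Δ - 1) / 2 then (if i + j + 1 < Δ then i + j + 1 else i + j + 1 - Δ)
  else Δ + (j - (Δ - 1) / 2)

/-- colour of a parent-child pair -/
def F (Δ : ℕ) : Vtx Δ → Vtx Δ → ℕ
  | Sum.inl _, Sum.inr (Sum.inl i) => i
  | Sum.inr (Sum.inl _), Sum.inr (Sum.inr (i, j)) => leafCol Δ i j
  | _, _ => 0

lemma leafCol_lt {Δ i j : ℕ} (hi : i < Δ) (hj : j < Δ - 1) : leafCol Δ i j < 3 * Δ / 2 := by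
  unfold leafCol; split_ifs <;> omega

lemma F_lt {Δ : ℕ} (hΔ : 1 ≤ Δ) (x y : Vtx Δ) : F Δ x y < 3 * Δ / 2 := by
  unfold F
  split
  · omega
  · exact leafCol_lt (Fin.is_lt _) (Fin.is_lt _)
  · omega

def col {Δ : ℕ} (hΔ : 1 ≤ Δ) : Sym2 (Vtx Δ) → Fin (3 * Δ / 2) :=
  Sym2.lift ⟨fun x y => ⟨max (F Δ x y) (F Δ y x), max_lt (F_lt hΔ _ _) (F_lt hΔ _ _)⟩,
    fun x y => by simp [max_comm]⟩

lemma col_root {Δ : ℕ} (hΔ : 1 ≤ Δ) (i : Fin Δ) :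
    (col hΔ s(Sum.inl (), Sum.inr (Sum.inl i)) : ℕ) = i := by
  simp [col, F]

lemma col_leaf {Δ : ℕ} (hΔ : 1 ≤ Δ) (i : Fin Δ) (j : Fin (Δ - 1)) :
    (col hΔ s(Sum.inr (Sum.inl i), Sum.inr (Sum.inr (i, j))) : ℕ) = leafCol Δ i j := by
  simp [col, F]

lemma leafCol_ne {Δ i j : ℕ} (hi : i < Δ) (hj : j < Δ - 1) : leafCol Δ i j ≠ i := by
  unfold leafCol; split_ifs <;> omega

lemma leafCol_inj {Δ i j j' : ℕ} (hi : i < Δ) (hj : j < Δ - 1) (hj' : j' < Δ - 1)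
    (h : leafCol Δ i j = leafCol Δ i j') : j = j' := by
  unfold leafCol at h; split_ifs at h <;> omega

lemma leafCol_key {Δ i i' j j' : ℕ} (hi : i < Δ) (hi' : i' < Δ)
    (h : leafCol Δ i j = i') (h' : leafCol Δ i' j' = i) : False := by
  unfold leafCol at h h'; split_ifs at h h' <;> omega

lemma col_star {Δ : ℕ} (hΔ : 1 ≤ Δ) : IsStarEdgeColoring (spiderTree Δ) (col hΔ) := by
  constructor
  · intro u v w huv huw hne heq
    have heq := congrArg Fin.val heq
    rcases adj_cases huv with ⟨i, rfl, rfl⟩ | ⟨i, j, rfl, rfl⟩ | ⟨i, rfl, rfl⟩ | ⟨i, j, rfl, rfl⟩ <;>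
    rcases adj_cases huw with ⟨a, h, rfl⟩ | ⟨a, b, h, rfl⟩ | ⟨a, rfl, h⟩ | ⟨a, b, rfl, h⟩ <;>
    simp at h
    · rw [col_root, col_root] at heq
      exact hne (by rw [Fin.ext heq])
    · subst h
      rw [col_leaf, col_leaf] at heq
      exact hne (by rw [Fin.ext (leafCol_inj i.2 j.2 b.2 heq)])
    · subst h
      rw [col_leaf, Sym2.eq_swap, col_root] at heq
      exact leafCol_ne i.2 j.2 heq
    · subst h
      rw [col_leaf, Sym2.eq_swap, col_root] at heq
      exact leafCol_ne i.2 b.2 heq.symm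
    · exact hne rfl
    · exact hne (by rw [h.1])
  · intro v₀ v₁ v₂ v₃ v₄ h01 h12 h23 h34 h
    have hn : v₀ ≠ v₂ ∧ v₁ ≠ v₃ ∧ v₂ ≠ v₄ := by
      rcases h with h | ⟨rfl, h⟩ <;> simp at h <;> tauto
    obtain ⟨i, i', j, j', hne, rfl, rfl, rfl, rfl, rfl⟩ :=
      walk_form h01 h12 h23 h34 hn.1 hn.2.1 hn.2.2
    rw [Sym2.eq_swap (a := Sum.inr (Sum.inl i)) (b := Sum.inl ()),
      Sym2.eq_swap (a := Sum.inr (Sum.inr (i, j)))]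
    have e1 := col_leaf hΔ i j
    have e2 := col_root hΔ i
    have e3 := col_root hΔ i'
    have e4 := col_leaf hΔ i' j'
    generalize col hΔ s(Sum.inr (Sum.inl i), Sum.inr (Sum.inr (i, j))) = a at *
    generalize col hΔ s(Sum.inl (), Sum.inr (Sum.inl i)) = b at *
    generalize col hΔ s(Sum.inl (), Sum.inr (Sum.inl i')) = c at *
    generalize col hΔ s(Sum.inr (Sum.inl i'), Sum.inr (Sum.inr (i', j'))) = d at *
    have hab : a ≠ b := fun h => leafCol_ne i.2 j.2 (by rw [← e1, h, e2])
    have hcd : d ≠ c := fun h => leafCol_ne i'.2 j'.2 (by rw [← e4, h, e3])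
    have hbc : b ≠ c := fun h => hne (Fin.ext (by rw [← e2, h, e3]))
    by_cases hac : a = c
    · have hbd : d ≠ b := fun h =>
        leafCol_key i.2 i'.2 (by rw [← e1, hac, e3]) (by rw [← e4, h, e2])
      have : ({b, c, d} : Finset (Fin (3 * Δ / 2))).card = 3 :=
        Finset.card_eq_three.2 ⟨b, c, d, hbc, hbd.symm, hcd.symm, rfl⟩
      refine this.symm.le.trans (Finset.card_le_card ?_)
      intro x; simp; tauto
    · have : ({a, b, c} : Finset (Fin (3 * Δ / 2))).card = 3 :=
        Finset.card_eq_three.2 ⟨a, b, c, hab, hac, hbc, rfl⟩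
      refine this.symm.le.trans (Finset.card_le_card ?_)
      intro x; simp; tauto

end SpiderAux

/-- For `Δ ≥ 1`, the star chromatic index of `T_Δ` equals `⌊3Δ/2⌋`. -/
theorem starChromaticIndex_spiderTree (Δ : ℕ) (hΔ : 1 ≤ Δ) :
    starChromaticIndex (spiderTree Δ) = 3 * Δ / 2 := by
  apply le_antisymm
  · exact Nat.sInf_le ⟨SpiderAux.col hΔ, SpiderAux.col_star hΔ⟩
  · refine le_csInf (s := {k : ℕ | ∃ c : Sym2 _ → Fin k, IsStarEdgeColoring (spiderTree Δ) c})
      ⟨_, SpiderAux.col hΔ, SpiderAux.col_star hΔ⟩ ?_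
    rintro k ⟨c, hc⟩
    exact SpiderAux.lower hΔ c hc
end

section
/- For every n ≥ 3 with n ≠ 5, the cycle graph C_n on n vertices admits a star edge coloring with 3 colors; that is, χ'_s(C_n) ≤ 3. -/
/-- The color (as a natural number) of the `i`-th edge of the cycle of length `n`. -/
def edgeCol (n i : ℕ) : ℕ :=
  if n % 3 = 0 then i % 3
  else if i + 1 = n then 1
  else if n % 3 = 1 then i % 3
  else if i + 2 = n then 2
  else if i + 3 = n then 1
  else if i + 4 = n then 0
  else if i + 5 = n then 1
  else i % 3

/-- Cyclic successor. -/
def cycSucc (n i : ℕ) : ℕ := if i + 1 = n then 0 else i + 1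

theorem edgeCol_lt (n i : ℕ) : edgeCol n i < 3 := by
  unfold edgeCol
  split_ifs <;> omega

theorem edgeCol_ne (n i : ℕ) (hn : 3 ≤ n) (hn5 : n ≠ 5) (hi : i < n) :
    edgeCol n i ≠ edgeCol n (cycSucc n i) := by
  unfold edgeCol cycSucc
  split_ifs <;> omega

theorem edgeCol_spec0 (n i : ℕ) (h : n % 3 = 0) : edgeCol n i = i % 3 := by
  unfold edgeCol
  split_ifs; omega

theorem edgeCol_spec1 (n i : ℕ) (h : n % 3 = 1) :
    (i + 1 = n ∧ edgeCol n i = 1) ∨ (i + 1 ≠ n ∧ edgeCol n i = i % 3) := by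
  unfold edgeCol
  split_ifs <;> omega

theorem edgeCol_spec2 (n i : ℕ) (h : n % 3 = 2) :
    (i + 1 = n ∧ edgeCol n i = 1) ∨ (i + 2 = n ∧ edgeCol n i = 2) ∨
    (i + 3 = n ∧ edgeCol n i = 1) ∨ (i + 4 = n ∧ edgeCol n i = 0) ∨
    (i + 5 = n ∧ edgeCol n i = 1) ∨
    ((i + 5 < n ∨ n ≤ i) ∧ edgeCol n i = i % 3) := by
  unfold edgeCol
  split_ifs <;> omega

theorem edgeCol_window0 (n i : ℕ) (hn : 4 ≤ n) (hn5 : n ≠ 5) (hi : i + 1 = n) :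
    ¬ (edgeCol n i = edgeCol n 1 ∧ edgeCol n 0 = edgeCol n 2) := by
  have h3 : n % 3 = 0 ∨ n % 3 = 1 ∨ n % 3 = 2 := by omega
  rcases h3 with h | h | h
  · have s0 := edgeCol_spec0 n i h
    have s1 := edgeCol_spec0 n 0 h
    have s2 := edgeCol_spec0 n 1 h
    have s3 := edgeCol_spec0 n 2 h
    omega
  · have s0 := edgeCol_spec1 n i h
    have s1 := edgeCol_spec1 n 0 h
    have s2 := edgeCol_spec1 n 1 h
    have s3 := edgeCol_spec1 n 2 h
    omega
  · have s0 := edgeCol_spec2 n i h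
    have s1 := edgeCol_spec2 n 0 h
    have s2 := edgeCol_spec2 n 1 h
    have s3 := edgeCol_spec2 n 2 h
    rcases s0 with s0 | s0 | s0 | s0 | s0 | s0 <;> try omega

theorem edgeCol_window1 (n i : ℕ) (hn : 4 ≤ n) (hn5 : n ≠ 5) (hi : i + 2 = n) :
    ¬ (edgeCol n i = edgeCol n 0 ∧ edgeCol n (i + 1) = edgeCol n 1) := by
  have h3 : n % 3 = 0 ∨ n % 3 = 1 ∨ n % 3 = 2 := by omega
  rcases h3 with h | h | h
  · have s0 := edgeCol_spec0 n i h
    have s1 := edgeCol_spec0 n (i + 1) h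
    have s2 := edgeCol_spec0 n 0 h
    have s3 := edgeCol_spec0 n 1 h
    omega
  · have s0 := edgeCol_spec1 n i h
    have s1 := edgeCol_spec1 n (i + 1) h
    have s2 := edgeCol_spec1 n 0 h
    have s3 := edgeCol_spec1 n 1 h
    omega
  · have s0 := edgeCol_spec2 n i h
    have s1 := edgeCol_spec2 n (i + 1) h
    have s2 := edgeCol_spec2 n 0 h
    have s3 := edgeCol_spec2 n 1 h
    rcases s0 with s0 | s0 | s0 | s0 | s0 | s0 <;> try omega

theorem edgeCol_window2 (n i : ℕ) (hn : 4 ≤ n) (hn5 : n ≠ 5) (hi : i + 3 = n) :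
    ¬ (edgeCol n i = edgeCol n (i + 2) ∧ edgeCol n (i + 1) = edgeCol n 0) := by
  have h3 : n % 3 = 0 ∨ n % 3 = 1 ∨ n % 3 = 2 := by omega
  rcases h3 with h | h | h
  · have s0 := edgeCol_spec0 n i h
    have s1 := edgeCol_spec0 n (i + 1) h
    have s2 := edgeCol_spec0 n (i + 2) h
    have s3 := edgeCol_spec0 n 0 h
    omega
  · have s0 := edgeCol_spec1 n i h
    have s1 := edgeCol_spec1 n (i + 1) h
    have s2 := edgeCol_spec1 n (i + 2) h
    have s3 := edgeCol_spec1 n 0 h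
    omega
  · have s0 := edgeCol_spec2 n i h
    have s1 := edgeCol_spec2 n (i + 1) h
    have s2 := edgeCol_spec2 n (i + 2) h
    have s3 := edgeCol_spec2 n 0 h
    rcases s0 with s0 | s0 | s0 | s0 | s0 | s0 <;> try omega

theorem edgeCol_window3 (n i : ℕ) (hn : 4 ≤ n) (hn5 : n ≠ 5) (hi : i + 3 < n) :
    ¬ (edgeCol n i = edgeCol n (i + 2) ∧ edgeCol n (i + 1) = edgeCol n (i + 3)) := by
  have h3 : n % 3 = 0 ∨ n % 3 = 1 ∨ n % 3 = 2 := by omega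
  rcases h3 with h | h | h
  · have s0 := edgeCol_spec0 n i h
    have s1 := edgeCol_spec0 n (i + 1) h
    have s2 := edgeCol_spec0 n (i + 2) h
    have s3 := edgeCol_spec0 n (i + 3) h
    omega
  · have s0 := edgeCol_spec1 n i h
    have s1 := edgeCol_spec1 n (i + 1) h
    have s2 := edgeCol_spec1 n (i + 2) h
    have s3 := edgeCol_spec1 n (i + 3) h
    omega
  · have s0 := edgeCol_spec2 n i h
    have s1 := edgeCol_spec2 n (i + 1) h
    have s2 := edgeCol_spec2 n (i + 2) h
    have s3 := edgeCol_spec2 n (i + 3) h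
    rcases s0 with s0 | s0 | s0 | s0 | s0 | s0 <;> try omega

theorem edgeCol_window (n i : ℕ) (hn : 4 ≤ n) (hn5 : n ≠ 5) (hi : i < n) :
    ¬ (edgeCol n i = edgeCol n (cycSucc n (cycSucc n i)) ∧
      edgeCol n (cycSucc n i) = edgeCol n (cycSucc n (cycSucc n (cycSucc n i)))) := by
  have hs : i + 1 = n ∨ i + 2 = n ∨ i + 3 = n ∨ i + 3 < n := by omega
  rcases hs with hs | hs | hs | hs
  · have e1 : cycSucc n i = 0 := by unfold cycSucc; split_ifs <;> omega
    have e2 : cycSucc n 0 = 1 := by unfold cycSucc; split_ifs <;> omega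
    have e3 : cycSucc n 1 = 2 := by unfold cycSucc; split_ifs <;> omega
    rw [e1, e2, e3]
    exact edgeCol_window0 n i hn hn5 hs
  · have e1 : cycSucc n i = i + 1 := by unfold cycSucc; split_ifs <;> omega
    have e2 : cycSucc n (i + 1) = 0 := by unfold cycSucc; split_ifs <;> omega
    have e3 : cycSucc n 0 = 1 := by unfold cycSucc; split_ifs <;> omega
    rw [e1, e2, e3]
    exact edgeCol_window1 n i hn hn5 hs
  · have e1 : cycSucc n i = i + 1 := by unfold cycSucc; split_ifs <;> omega
    have e2 : cycSucc n (i + 1) = i + 2 := by unfold cycSucc; split_ifs <;> omega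
    have e3 : cycSucc n (i + 2) = 0 := by unfold cycSucc; split_ifs <;> omega
    rw [e1, e2, e3]
    exact edgeCol_window2 n i hn hn5 hs
  · have e1 : cycSucc n i = i + 1 := by unfold cycSucc; split_ifs <;> omega
    have e2 : cycSucc n (i + 1) = i + 2 := by unfold cycSucc; split_ifs <;> omega
    have e3 : cycSucc n (i + 2) = i + 3 := by unfold cycSucc; split_ifs <;> omega
    rw [e1, e2, e3]
    exact edgeCol_window3 n i hn hn5 hs

/-- The coloring of the edges of the cycle. -/
def cycCol (n : ℕ) : Sym2 (Fin n) → Fin 3 :=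
  Sym2.lift ⟨fun a b =>
    ⟨edgeCol n (if max a.val b.val = min a.val b.val + 1 then min a.val b.val else n - 1),
      edgeCol_lt _ _⟩, by
    intro a b
    simp only [max_comm a.val b.val, min_comm a.val b.val]⟩

theorem cycCol_val (n : ℕ) (hn : 3 ≤ n) (a b : Fin n) (h : b.val = cycSucc n a.val) :
    (cycCol n s(a, b)).val = edgeCol n a.val := by
  have ha := a.isLt
  simp only [cycCol, Sym2.lift_mk]
  congr 1
  unfold cycSucc at h
  split_ifs at h ⊢ <;> omega

theorem cycCol_val' (n : ℕ) (hn : 3 ≤ n) (a b : Fin n) (h : a.val = cycSucc n b.val) :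
    (cycCol n s(a, b)).val = edgeCol n b.val := by
  rw [Sym2.eq_swap]
  exact cycCol_val n hn b a h

theorem adj_cases (n : ℕ) (hn : 3 ≤ n) (a b : Fin n)
    (h : (SimpleGraph.cycleGraph n).Adj a b) :
    b.val = cycSucc n a.val ∨ a.val = cycSucc n b.val := by
  rw [SimpleGraph.cycleGraph_adj'] at h
  have ha := a.isLt
  have hb := b.isLt
  unfold cycSucc
  rcases h with h | h
  · right
    rw [Fin.val_sub] at h
    rcases Nat.lt_or_ge (n - b.val + a.val) n with h1 | h1
    · rw [Nat.mod_eq_of_lt h1] at h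
      split_ifs <;> omega
    · rw [Nat.mod_eq_sub_mod h1, Nat.mod_eq_of_lt (by omega)] at h
      split_ifs <;> omega
  · left
    rw [Fin.val_sub] at h
    rcases Nat.lt_or_ge (n - a.val + b.val) n with h1 | h1
    · rw [Nat.mod_eq_of_lt h1] at h
      split_ifs <;> omega
    · rw [Nat.mod_eq_sub_mod h1, Nat.mod_eq_of_lt (by omega)] at h
      split_ifs <;> omega

theorem cycSucc_inj (n a b : ℕ) (h : cycSucc n a = cycSucc n b) : a = b := by
  unfold cycSucc at h
  split_ifs at h <;> omega

theorem card_three : ∀ a b c d : Fin 3, a ≠ b → b ≠ c → c ≠ d → ¬ (a = c ∧ b = d) →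
    3 ≤ ({a, b, c, d} : Finset (Fin 3)).card := by decide

/-- Two consecutive edges at distinct neighbours continue in the same direction. -/
theorem fwd_step (n : ℕ) (hn : 3 ≤ n) (a b c : Fin n) (hab : b.val = cycSucc n a.val)
    (hac : a ≠ c) (h : (SimpleGraph.cycleGraph n).Adj b c) : c.val = cycSucc n b.val := by
  rcases adj_cases n hn b c h with h | h
  · exact h
  · exact absurd (Fin.ext (cycSucc_inj n _ _ (hab.symm.trans h))) hac

theorem bwd_step (n : ℕ) (hn : 3 ≤ n) (a b c : Fin n) (hab : a.val = cycSucc n b.val)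
    (hac : a ≠ c) (h : (SimpleGraph.cycleGraph n).Adj b c) : b.val = cycSucc n c.val := by
  rcases adj_cases n hn b c h with h | h
  · exact absurd (Fin.ext (hab.trans h.symm)) hac
  · exact h

theorem cycSucc_three (a : ℕ) (ha : a < 3) : cycSucc 3 (cycSucc 3 (cycSucc 3 a)) = a := by
  interval_cases a <;> rfl

theorem window_fwd (n : ℕ) (hn : 3 ≤ n) (hn5 : n ≠ 5) (a b c d e : Fin n)
    (hab : b.val = cycSucc n a.val) (hbc : c.val = cycSucc n b.val)
    (hcd : d.val = cycSucc n c.val) (hde : e.val = cycSucc n d.val) (had : a ≠ d) :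
    3 ≤ ({cycCol n s(a, b), cycCol n s(b, c), cycCol n s(c, d), cycCol n s(d, e)} :
      Finset (Fin 3)).card := by
  have e1 := cycCol_val n hn a b hab
  have e2 := cycCol_val n hn b c hbc
  have e3 := cycCol_val n hn c d hcd
  have e4 := cycCol_val n hn d e hde
  have hn4 : 4 ≤ n := by
    by_contra hlt
    obtain rfl : n = 3 := by omega
    apply had
    apply Fin.ext
    rw [hcd, hbc, hab, cycSucc_three _ a.isLt]
  apply card_three
  · rw [Ne, Fin.ext_iff, e1, e2, hab]
    exact edgeCol_ne n _ hn hn5 a.isLt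
  · rw [Ne, Fin.ext_iff, e2, e3, hbc]
    exact edgeCol_ne n _ hn hn5 b.isLt
  · rw [Ne, Fin.ext_iff, e3, e4, hcd]
    exact edgeCol_ne n _ hn hn5 c.isLt
  · rw [Fin.ext_iff, Fin.ext_iff, e1, e2, e3, e4, hcd, hbc, hab]
    exact edgeCol_window n _ hn4 hn5 a.isLt

theorem cycCol_star (n : ℕ) (hn : 3 ≤ n) (hn5 : n ≠ 5) :
    IsStarEdgeColoring (SimpleGraph.cycleGraph n) (cycCol n) := by
  constructor
  · intro u v w huv huw hvw
    rw [Ne, Fin.ext_iff]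
    rcases adj_cases n hn u v huv with h | h
    · have h2 := bwd_step n hn v u w h hvw huw
      rw [cycCol_val n hn u v h, cycCol_val' n hn u w h2, h2]
      exact (edgeCol_ne n _ hn hn5 w.isLt).symm
    · have h2 := fwd_step n hn v u w h hvw huw
      rw [cycCol_val' n hn u v h, cycCol_val n hn u w h2, h]
      exact edgeCol_ne n _ hn hn5 v.isLt
  · intro a b c d e hab hbc hcd hde hdist
    have hd : a ≠ c ∧ b ≠ d ∧ c ≠ e ∧ a ≠ d ∧ b ≠ e := by
      rcases hdist with h | ⟨rfl, h⟩
      · simp at h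
        tauto
      · simp at h
        refine ⟨?_, ?_, ?_, ?_, ?_⟩ <;> grind
    obtain ⟨hac, hbd, hce, had, hbe⟩ := hd
    rcases adj_cases n hn a b hab with h1 | h1
    · have h2 := fwd_step n hn a b c h1 hac hbc
      have h3 := fwd_step n hn b c d h2 hbd hcd
      have h4 := fwd_step n hn c d e h3 hce hde
      exact window_fwd n hn hn5 a b c d e h1 h2 h3 h4 had
    · have h2 := bwd_step n hn a b c h1 hac hbc
      have h3 := bwd_step n hn b c d h2 hbd hcd
      have h4 := bwd_step n hn c d e h3 hce hde
      have := window_fwd n hn hn5 e d c b a h4 h3 h2 h1 hbe.symm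
      convert this using 2
      rw [Sym2.eq_swap (a := e) (b := d), Sym2.eq_swap (a := d) (b := c),
        Sym2.eq_swap (a := c) (b := b), Sym2.eq_swap (a := b) (b := a)]
      ext x
      simp only [Finset.mem_insert, Finset.mem_singleton]
      tauto

/-- For every `n ≥ 3` with `n ≠ 5`, the cycle graph on `n` vertices admits a
star edge coloring with 3 colors. -/
theorem starChromaticIndex_cycleGraph_le (n : ℕ) (hn : 3 ≤ n) (hn5 : n ≠ 5) :
    starChromaticIndex (SimpleGraph.cycleGraph n) ≤ 3 :=
  Nat.sInf_le ⟨cycCol n, cycCol_star n hn hn5⟩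
end

section
/- Let H be the graph on 10 vertices obtained from the 5-cycle v_1 v_2 v_3 v_4 v_5 by attaching one pendant vertex (a new vertex of degree 1 joined by one edge) to each v_i. Then the star chromatic index of H equals 5: H admits no star edge coloring with 4 colors, and it admits a star edge coloring with 5 colors. -/
/-- The graph obtained from a 5-cycle by attaching one pendant vertex to each
of its five vertices: the vertices `Sum.inl i` form the cycle and `Sum.inr i`
is the pendant vertex attached to `Sum.inl i`. -/
def pendant5Cycle : SimpleGraph (Fin 5 ⊕ Fin 5) :=
  SimpleGraph.fromRel fun x y =>
    (∃ i : Fin 5, x = Sum.inl i ∧ y = Sum.inl (i + 1)) ∨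
    (∃ i : Fin 5, x = Sum.inl i ∧ y = Sum.inr i)

/-- Boolean adjacency of the pendant 5-cycle. -/
def adjB : Fin 5 ⊕ Fin 5 → Fin 5 ⊕ Fin 5 → Bool
  | Sum.inl i, Sum.inl j => j == i + 1 || i == j + 1
  | Sum.inl i, Sum.inr j => i == j
  | Sum.inr i, Sum.inl j => i == j
  | Sum.inr _, Sum.inr _ => false

lemma adj_iff (x y : Fin 5 ⊕ Fin 5) : pendant5Cycle.Adj x y ↔ adjB x y = true := by
  unfold pendant5Cycle
  rw [SimpleGraph.fromRel_adj]
  revert x y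
  decide +kernel

/-- An explicit 5-coloring, as a function of ordered pairs. -/
def colF : Fin 5 ⊕ Fin 5 → Fin 5 ⊕ Fin 5 → Fin 5
  | Sum.inl i, Sum.inl j =>
      if j = i + 1 then ![0, 1, 0, 2, 3] i else if i = j + 1 then ![0, 1, 0, 2, 3] j else 0
  | Sum.inl i, Sum.inr _ => ![2, 2, 2, 4, 1] i
  | Sum.inr _, Sum.inl j => ![2, 2, 2, 4, 1] j
  | Sum.inr _, Sum.inr _ => 0

lemma colF_symm : ∀ x y, colF x y = colF y x := by decide +kernel

/-- The explicit 5-coloring. -/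
def col5 : Sym2 (Fin 5 ⊕ Fin 5) → Fin 5 := Sym2.lift ⟨colF, colF_symm⟩

lemma colF_proper : ∀ u v, adjB u v = true → ∀ w, adjB u w = true → v ≠ w →
    colF u v ≠ colF u w := by decide +kernel

lemma colF_star : ∀ v₀ v₁, adjB v₀ v₁ = true → ∀ v₂, adjB v₁ v₂ = true →
    ∀ v₃, adjB v₂ v₃ = true → ∀ v₄, adjB v₃ v₄ = true →
    ([v₀, v₁, v₂, v₃, v₄].Pairwise (· ≠ ·) ∨
      (v₀ = v₄ ∧ [v₀, v₁, v₂, v₃].Pairwise (· ≠ ·))) →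
    3 ≤ ({colF v₀ v₁, colF v₁ v₂, colF v₂ v₃, colF v₃ v₄} : Finset (Fin 5)).card := by
  decide +kernel

lemma col5_isStar : IsStarEdgeColoring pendant5Cycle col5 := by
  refine ⟨?_, ?_⟩
  · intro u v w h1 h2 h
    rw [adj_iff] at h1 h2
    exact colF_proper u v h1 w h2 h
  · intro v₀ v₁ v₂ v₃ v₄ h1 h2 h3 h4 h
    rw [adj_iff] at h1 h2 h3 h4
    exact colF_star v₀ v₁ h1 v₂ h2 v₃ h3 v₄ h4 h

lemma not_alternating {k : ℕ} {x y z w : Fin k}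
    (h : 3 ≤ ({x, y, z, w} : Finset (Fin k)).card) : ¬ (x = z ∧ y = w) := by
  rintro ⟨rfl, rfl⟩
  have h2 : ({x, y, x, y} : Finset (Fin k)) = {x, y} := by
    ext t; simp
  rw [h2] at h
  have := Finset.card_le_two (a := x) (b := y)
  omega

set_option synthInstance.maxSize 10000 in
set_option synthInstance.maxHeartbeats 400000 in
set_option maxRecDepth 10000 in
/-- The finite search: no assignment of 4 colors to cycle edges `aᵢ` and pendant edges `pᵢ`. -/
lemma no_four : ∀ a0 a1 : Fin 4, a0 ≠ a1 → ∀ a2, a1 ≠ a2 → ∀ a3, a2 ≠ a3 →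
    ¬ (a0 = a2 ∧ a1 = a3) → ∀ a4, a3 ≠ a4 → a4 ≠ a0 →
    ¬ (a1 = a3 ∧ a2 = a4) → ¬ (a2 = a4 ∧ a3 = a0) → ¬ (a3 = a0 ∧ a4 = a1) →
    ¬ (a4 = a1 ∧ a0 = a2) →
    ∀ p0, p0 ≠ a0 → p0 ≠ a4 → ¬ (p0 = a1 ∧ a0 = a2) → ¬ (p0 = a3 ∧ a4 = a2) →
    ∀ p1, p1 ≠ a1 → p1 ≠ a0 → ¬ (p1 = a2 ∧ a1 = a3) → ¬ (p1 = a4 ∧ a0 = a3) →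
    ∀ p2, p2 ≠ a2 → p2 ≠ a1 → ¬ (p2 = a3 ∧ a2 = a4) → ¬ (p2 = a0 ∧ a1 = a4) →
    ¬ (p0 = a1 ∧ a0 = p2) →
    ∀ p3, p3 ≠ a3 → p3 ≠ a2 → ¬ (p3 = a4 ∧ a3 = a0) → ¬ (p3 = a1 ∧ a2 = a0) →
    ¬ (p1 = a2 ∧ a1 = p3) → ¬ (p3 = a4 ∧ a3 = p0) →
    ∀ p4, p4 ≠ a4 → p4 ≠ a3 → ¬ (p4 = a0 ∧ a4 = a1) → ¬ (p4 = a2 ∧ a3 = a1) →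
    ¬ (p2 = a3 ∧ a2 = p4) → ¬ (p4 = a0 ∧ a4 = p1) → False := by
  decide +kernel

lemma not_four (c : Sym2 (Fin 5 ⊕ Fin 5) → Fin 4) : ¬ IsStarEdgeColoring pendant5Cycle c := by
  rintro ⟨hp, hs⟩
  -- colors of the cycle edges and of the pendant edges
  let a : Fin 5 → Fin 4 := fun i => c s(Sum.inl i, Sum.inl (i + 1))
  let p : Fin 5 → Fin 4 := fun i => c s(Sum.inl i, Sum.inr i)
  have haa : ∀ i, a i ≠ a (i + 1) := by
    intro i
    have := hp (Sum.inl (i + 1)) (Sum.inl i) (Sum.inl (i + 1 + 1))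
      (by rw [adj_iff]; revert i; decide) (by rw [adj_iff]; revert i; decide)
      (by revert i; decide)
    rwa [Sym2.eq_swap] at this
  have hpa : ∀ i, p i ≠ a i := by
    intro i
    exact hp (Sum.inl i) (Sum.inr i) (Sum.inl (i + 1))
      (by rw [adj_iff]; revert i; decide) (by rw [adj_iff]; revert i; decide)
      (by revert i; decide)
  have hpa' : ∀ i, p (i + 1) ≠ a i := by
    intro i
    have := hp (Sum.inl (i + 1)) (Sum.inr (i + 1)) (Sum.inl i)
      (by rw [adj_iff]; revert i; decide) (by rw [adj_iff]; revert i; decide)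
      (by revert i; decide)
    rwa [Sym2.eq_swap (a := Sum.inl (i + 1)) (b := Sum.inl i)] at this
  have h4 : ∀ i, ¬ (a i = a (i + 1 + 1) ∧ a (i + 1) = a (i + 1 + 1 + 1)) := by
    intro i
    exact not_alternating (hs (Sum.inl i) (Sum.inl (i + 1)) (Sum.inl (i + 1 + 1))
      (Sum.inl (i + 1 + 1 + 1)) (Sum.inl (i + 1 + 1 + 1 + 1))
      (by rw [adj_iff]; revert i; decide) (by rw [adj_iff]; revert i; decide)
      (by rw [adj_iff]; revert i; decide) (by rw [adj_iff]; revert i; decide)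
      (by revert i; decide))
  have h31 : ∀ i, ¬ (p i = a (i + 1) ∧ a i = a (i + 1 + 1)) := by
    intro i
    have := not_alternating (hs (Sum.inr i) (Sum.inl i) (Sum.inl (i + 1)) (Sum.inl (i + 1 + 1))
      (Sum.inl (i + 1 + 1 + 1))
      (by rw [adj_iff]; revert i; decide) (by rw [adj_iff]; revert i; decide)
      (by rw [adj_iff]; revert i; decide) (by rw [adj_iff]; revert i; decide)
      (by revert i; decide))
    rwa [Sym2.eq_swap (a := Sum.inr i)] at this
  have h13 : ∀ i, ¬ (p (i + 1 + 1 + 1) = a (i + 1) ∧ a (i + 1 + 1) = a i) := by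
    intro i
    have := not_alternating (hs (Sum.inl i) (Sum.inl (i + 1)) (Sum.inl (i + 1 + 1))
      (Sum.inl (i + 1 + 1 + 1)) (Sum.inr (i + 1 + 1 + 1))
      (by rw [adj_iff]; revert i; decide) (by rw [adj_iff]; revert i; decide)
      (by rw [adj_iff]; revert i; decide) (by rw [adj_iff]; revert i; decide)
      (by revert i; decide))
    exact fun h => this ⟨h.2.symm, h.1.symm⟩
  have h22 : ∀ i, ¬ (p i = a (i + 1) ∧ a i = p (i + 1 + 1)) := by
    intro i
    have := not_alternating (hs (Sum.inr i) (Sum.inl i) (Sum.inl (i + 1)) (Sum.inl (i + 1 + 1))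
      (Sum.inr (i + 1 + 1))
      (by rw [adj_iff]; revert i; decide) (by rw [adj_iff]; revert i; decide)
      (by rw [adj_iff]; revert i; decide) (by rw [adj_iff]; revert i; decide)
      (by revert i; decide))
    rwa [Sym2.eq_swap (a := Sum.inr i)] at this
  exact no_four (a 0) (a 1) (haa 0) (a 2) (haa 1) (a 3) (haa 2) (h4 0) (a 4) (haa 3) (haa 4)
    (h4 1) (h4 2) (h4 3) (h4 4)
    (p 0) (hpa 0) (hpa' 4) (h31 0) (h13 2)
    (p 1) (hpa 1) (hpa' 0) (h31 1) (h13 3)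
    (p 2) (hpa 2) (hpa' 1) (h31 2) (h13 4) (h22 0)
    (p 3) (hpa 3) (hpa' 2) (h31 3) (h13 0) (h22 1) (h22 3)
    (p 4) (hpa 4) (hpa' 3) (h31 4) (h13 1) (h22 2) (h22 4)

lemma star_mono {V : Type*} {G : SimpleGraph V} {k l : ℕ} (hkl : k ≤ l) {c : Sym2 V → Fin k}
    (h : IsStarEdgeColoring G c) : IsStarEdgeColoring G (fun e => Fin.castLE hkl (c e)) := by
  refine ⟨fun u v w h1 h2 h3 h4 => h.1 u v w h1 h2 h3 (Fin.castLE_injective hkl h4), ?_⟩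
  intro v₀ v₁ v₂ v₃ v₄ h1 h2 h3 h4 h5
  have := h.2 v₀ v₁ v₂ v₃ v₄ h1 h2 h3 h4 h5
  rw [← Finset.card_image_of_injective _ (Fin.castLE_injective hkl)] at this
  simpa [Finset.image_insert] using this

/-- The star chromatic index of the 5-cycle with a pendant edge at every vertex
equals 5: it admits no star edge coloring with 4 colors, but admits one with
5 colors. -/
theorem starChromaticIndex_pendant5Cycle :
    starChromaticIndex pendant5Cycle = 5 ∧
    (¬ ∃ c : Sym2 (Fin 5 ⊕ Fin 5) → Fin 4, IsStarEdgeColoring pendant5Cycle c) ∧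
    (∃ c : Sym2 (Fin 5 ⊕ Fin 5) → Fin 5, IsStarEdgeColoring pendant5Cycle c) := by
  refine ⟨?_, fun ⟨c, hc⟩ => not_four c hc, col5, col5_isStar⟩
  unfold starChromaticIndex
  apply le_antisymm
  · exact Nat.sInf_le ⟨col5, col5_isStar⟩
  · refine le_csInf ⟨5, col5, col5_isStar⟩ ?_
    rintro k ⟨c, hc⟩
    by_contra hk
    exact not_four _ (star_mono (by omega : k ≤ 4) hc)
end

section
/- Let the spider lower bound hold in the following quantitative form: if T is a tree containing a vertex v of degree Δ whose neighbors v_1, …, v_Δ each have degree Δ, and T admits a star edge coloring with Δ + k colors, then k ≥ (Δ−1)/2, i.e., Δ(Δ−1)/2 + kΔ ≥ Δ(Δ−1); consequently every star edge coloring of T uses at least ⌊3Δ/2⌋ colors. -/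
/-- Quantitative spider lower bound: if a finite tree has a vertex `v` of
degree `Δ` all of whose neighbors also have degree `Δ`, and the tree admits a
star edge coloring with `Δ + k` colors, then `Δ(Δ-1)/2 + kΔ ≥ Δ(Δ-1)`, hence
`k ≥ (Δ-1)/2`, and consequently every star edge coloring of the tree uses at
least `⌊3Δ/2⌋` colors. -/
theorem spider_lower_bound {V : Type*} [Fintype V]
    (G : SimpleGraph V) [DecidableRel G.Adj]
    (hconn : G.Connected) (hacyc : G.IsAcyclic)
    (v : V) (Δ k : ℕ) (hv : G.degree v = Δ)
    (hnb : ∀ u : V, G.Adj v u → G.degree u = Δ)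
    (hcol : ∃ c : Sym2 V → Fin (Δ + k), IsStarEdgeColoring G c) :
    Δ * (Δ - 1) ≤ Δ * (Δ - 1) / 2 + k * Δ ∧
    Δ - 1 ≤ 2 * k ∧
    3 * Δ / 2 ≤ Δ + k := by
  classical
  obtain ⟨c, hprop, hstar⟩ := hcol
  set N := G.neighborFinset v with hN
  have hNc : N.card = Δ := by rw [hN, SimpleGraph.card_neighborFinset_eq_degree, hv]
  have memN : ∀ u, u ∈ N ↔ G.Adj v u := fun u => by simp [hN]
  let S : Finset (Fin (Δ + k)) := N.image (fun u => c s(v, u))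
  have hSc : S.card = Δ := by
    refine (Finset.card_image_of_injOn ?_).trans hNc
    intro a ha b hb hab
    by_contra hne
    exact hprop v a b ((memN a).1 ha) ((memN b).1 hb) hne hab
  let A : V → Finset (Fin (Δ + k)) :=
    fun u => ((G.neighborFinset u).erase v).image (fun w => c s(u, w))
  have memA : ∀ u x, x ∈ A u ↔ ∃ w, w ≠ v ∧ G.Adj u w ∧ c s(u, w) = x := by
    intro u x
    simp [A, and_assoc]
  have hAc : ∀ u ∈ N, (A u).card = Δ - 1 := by
    intro u hu
    have hu' := (memN u).1 hu
    rw [Finset.card_image_of_injOn]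
    · rw [Finset.card_erase_of_mem (by simpa using hu'.symm),
        SimpleGraph.card_neighborFinset_eq_degree, hnb u hu']
    · intro a ha b hb hab
      by_contra hne
      have ha' : G.Adj u a := by simpa using (Finset.mem_erase.1 ha).2
      have hb' : G.Adj u b := by simpa using (Finset.mem_erase.1 hb).2
      exact hprop u a b ha' hb' hne hab
  have hself : ∀ u ∈ N, c s(v, u) ∉ A u := by
    intro u hu h
    obtain ⟨w, hw, huw, he⟩ := (memA _ _).1 h
    rw [Sym2.eq_swap (a := v)] at he
    exact hprop u w v huw ((memN u).1 hu).symm hw he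
  have hanti : ∀ u ∈ N, ∀ u' ∈ N, c s(v, u') ∈ A u → c s(v, u) ∈ A u' → False := by
    intro u hu u' hu' h h'
    have hne : u ≠ u' := by
      rintro rfl
      exact hself _ hu h
    obtain ⟨w, hw, huw, he⟩ := (memA _ _).1 h
    obtain ⟨w', hw', huw', he'⟩ := (memA _ _).1 h'
    have hvu := (memN u).1 hu
    have hvu' := (memN u').1 hu'
    have h1 : w ≠ u' := by
      rintro rfl
      rw [Sym2.eq_swap (a := u), Sym2.eq_swap (a := v)] at he
      exact hprop w u v huw.symm hvu'.symm hvu.ne' he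
    have h2 : w' ≠ u := by
      rintro rfl
      rw [Sym2.eq_swap (a := u'), Sym2.eq_swap (a := v)] at he'
      exact hprop w' u' v huw'.symm hvu.symm hvu'.ne' he'
    have key := hstar w u v u' w' huw.symm hvu.symm hvu' huw' (by
      have e1 := huw.ne'
      have e2 := hvu.ne'
      have e3 := hvu'.ne
      have e4 := huw'.ne
      by_cases hww : w = w'
      · right
        refine ⟨hww, ?_⟩
        simp [e1, e2, e3, hw, h1, hne]
      · left
        simp [*, h2.symm, hw'.symm])
    rw [Sym2.eq_swap (a := w), Sym2.eq_swap (a := u) (b := v), he, he'] at key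
    have : ({c s(v, u'), c s(v, u), c s(v, u'), c s(v, u)} : Finset (Fin (Δ + k)))
        ⊆ {c s(v, u'), c s(v, u)} := by
      intro x hx
      simp only [Finset.mem_insert, Finset.mem_singleton] at hx ⊢
      tauto
    have := Finset.card_le_card this
    have := Finset.card_le_two (a := c s(v, u')) (b := c s(v, u))
    omega
  let r : V → V → ℕ := fun u u' => if c s(v, u') ∈ A u then 1 else 0
  have hA : ∀ u ∈ N, Δ - 1 ≤ (∑ u' ∈ N, r u u') + k := by
    intro u hu
    rw [← hAc u hu, ← Finset.card_inter_add_card_sdiff (A u) S]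
    apply add_le_add
    · rw [← Finset.card_filter]
      refine le_trans (Finset.card_le_card ?_)
        (Finset.card_image_le (f := fun u' => c s(v, u')))
      intro x hx
      obtain ⟨hx1, hx2⟩ := Finset.mem_inter.1 hx
      obtain ⟨u', hu', rfl⟩ := Finset.mem_image.1 hx2
      exact Finset.mem_image.2 ⟨u', Finset.mem_filter.2 ⟨hu', hx1⟩, rfl⟩
    · have h1 : (A u \ S).card ≤ Sᶜ.card := Finset.card_le_card (by
        intro x hx
        simpa using (Finset.mem_sdiff.1 hx).2)
      rw [Finset.card_compl, hSc, Fintype.card_fin] at h1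
      omega
  have hsum : Δ * (Δ - 1) ≤ (∑ u ∈ N, ∑ u' ∈ N, r u u') + k * Δ := by
    have := Finset.sum_le_sum hA
    simp only [Finset.sum_add_distrib, Finset.sum_const, hNc, smul_eq_mul] at this
    linarith [mul_comm k Δ]
  have htwo : 2 * (∑ u ∈ N, ∑ u' ∈ N, r u u') ≤ Δ * (Δ - 1) := by
    have h1 : 2 * (∑ u ∈ N, ∑ u' ∈ N, r u u') = ∑ u ∈ N, ∑ u' ∈ N, (r u u' + r u' u) := by
      simp only [Finset.sum_add_distrib]
      rw [Finset.sum_comm (f := fun u u' => r u' u)]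
      ring
    rw [h1]
    have h2 : ∀ u ∈ N, ∑ u' ∈ N, (r u u' + r u' u) ≤ Δ - 1 := by
      intro u hu
      rw [← Finset.add_sum_erase N _ hu]
      have h0 : r u u = 0 := by simp [r, hself u hu]
      have h3 : ∑ u' ∈ N.erase u, (r u u' + r u' u) ≤ ∑ u' ∈ N.erase u, 1 := by
        apply Finset.sum_le_sum
        intro u' hu'
        have := hanti u hu u' (Finset.mem_of_mem_erase hu')
        simp only [r]
        split_ifs with a b
        · exact (this a b).elim
        all_goals simp
      rw [Finset.sum_const, Finset.card_erase_of_mem hu, hNc] at h3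
      simp only [smul_eq_mul, mul_one] at h3
      omega
    have := Finset.sum_le_sum h2
    simpa [hNc] using this
  have hfirst : Δ * (Δ - 1) ≤ Δ * (Δ - 1) / 2 + k * Δ := by omega
  have hsecond : Δ - 1 ≤ 2 * k := by
    rcases Nat.eq_zero_or_pos Δ with h | h
    · omega
    · have : Δ * (Δ - 1) ≤ Δ * (2 * k) := by
        have e : Δ * (2 * k) = 2 * (k * Δ) := by ring
        omega
      exact Nat.le_of_mul_le_mul_left this h
  exact ⟨hfirst, hsecond, by omega⟩
end
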